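/- Let K be a finite field of characteristic 2, and let B, C ∈ K[X] be nonzero polynomials such that B is monic of degree at least 2, every irreducible factor of B divides C exactly once (i.e., every prime factor of B is a simple prime factor of C), and deg C < 2·deg B. Let R := K[x][y] = K[X,Y]/(Y² + B(X)Y + C(X)), regarded as a module over K[x], and suppose R is generated by its units as a K[x]-module. Then there exists a polynomial a ∈ K[X] such that a(x) + y is a unit of R and every unit of R has the form λ·(a(x) + y)^n for some nonzero λ ∈ K and some integer n (where negative powers are taken in the unit group of R). -/

import Mathlib

/-!
A unit `u` of a quadratic order over `K[X]` is measured by the degree of its coordinate `u.im`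
along `ω`. For units `u`, `v` one has
`(u * v).im + (u * star v).im = u.im * trace v` and
`(u * v).im * (u * star v).im = v.norm * u.im ^ 2 - u.norm * v.im ^ 2`,
and if the discriminant is nonconstant, so is `trace v` whenever `v.im ≠ 0`. Hence if `v.im` is
nonzero of degree at most that of `u.im`, then multiplying `u` by `v` or by `v⁻¹` makes the degree
drop, and a nontrivial unit `ε` of minimal degree generates all units up to constants. All powers
of `ε` lie in the order of conductor `ε.im`, so if the units span the whole ring, `ε.im` is a
constant and `ε` can be rescaled to `a + ω`.
-/

open Polynomial QuadraticAlgebra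

section FundamentalUnit

variable {R A B : Type*} [CommSemiring R] [CommSemiring A] [CommSemiring B] [Algebra R A]
  [Algebra R B]

variable (R) in
/-- `ε` is a fundamental unit of the `R`-algebra `A`: up to units coming from `R`, every unit is a
power of `ε`. The case where `ε` has finite order is not excluded. -/
def IsFundamentalUnit (ε : Aˣ) : Prop :=
  ∀ u : Aˣ, ∃ (c : Rˣ) (n : ℤ), u = Units.map (algebraMap R A) c * ε ^ n

namespace IsFundamentalUnit

lemma map_algebraMap_mul {ε : Aˣ} (hε : IsFundamentalUnit R ε) (d : Rˣ) :
    IsFundamentalUnit R (Units.map (algebraMap R A) d * ε) := fun u ↦ by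
  obtain ⟨c, n, rfl⟩ := hε u
  refine ⟨c * (d ^ n)⁻¹, n, ?_⟩
  rw [mul_zpow, map_mul, map_inv, map_zpow, mul_assoc, inv_mul_cancel_left]

lemma map_algEquiv {ε : Aˣ} (hε : IsFundamentalUnit R ε) (e : A ≃ₐ[R] B) :
    IsFundamentalUnit R (Units.mapEquiv e.toMulEquiv ε) := fun u ↦ by
  obtain ⟨c, n, hcn⟩ := hε ((Units.mapEquiv e.toMulEquiv).symm u)
  refine ⟨c, n, ?_⟩
  rw [MulEquiv.symm_apply_eq, map_mul, map_zpow] at hcn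
  rw [hcn]
  congr 1
  exact Units.ext (e.commutes c)

end IsFundamentalUnit

end FundamentalUnit

lemma span_isUnit_eq_top_of_surjective {R A B : Type*} [CommSemiring R] [Semiring A] [Semiring B]
    [Algebra R A] [Algebra R B] (f : A →ₐ[R] B) (hf : Function.Surjective f)
    (hA : Submodule.span R {u : A | IsUnit u} = ⊤) :
    Submodule.span R {u : B | IsUnit u} = ⊤ := by
  rw [eq_top_iff, ← LinearMap.range_eq_top.mpr (show Function.Surjective f.toLinearMap from hf),
    LinearMap.range_eq_map, ← hA, Submodule.map_span]
  refine Submodule.span_mono ?_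
  rintro _ ⟨u, hu, rfl⟩
  exact IsUnit.map f hu

section QuadraticAlgebra

variable {R : Type*} [CommRing R] {a b : R}

lemma trace_sq_eq_discr_mul_im_sq_add_norm (z : QuadraticAlgebra R a b) :
    trace z ^ 2 = (b ^ 2 + 4 * a) * z.im ^ 2 + 4 * z.norm := by
  rw [trace_def, norm_def]
  ring

lemma im_mul_add_im_mul_star (z w : QuadraticAlgebra R a b) :
    (z * w).im + (z * star w).im = z.im * trace w := by
  simp only [im_mul, re_star, im_star, trace_def]
  ring

lemma im_mul_mul_im_mul_star (z w : QuadraticAlgebra R a b) :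
    (z * w).im * (z * star w).im = w.norm * z.im ^ 2 - z.norm * w.im ^ 2 := by
  simp only [im_mul, re_star, im_star, norm_def]
  ring

lemma star_val_eq_norm_smul_inv (u : (QuadraticAlgebra R a b)ˣ) :
    star (u : QuadraticAlgebra R a b) =
      (u : QuadraticAlgebra R a b).norm • (↑u⁻¹ : QuadraticAlgebra R a b) := by
  rw [Algebra.smul_def, Units.eq_mul_inv_iff_mul_eq, algebraMap_norm_eq_mul_star, mul_comm]

lemma exists_eq_map_algebraMap_of_im_eq_zero {u : (QuadraticAlgebra R a b)ˣ}
    (hu : (u : QuadraticAlgebra R a b).im = 0) :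
    ∃ c : Rˣ, u = Units.map (algebraMap R (QuadraticAlgebra R a b)) c := by
  have hnorm := isUnit_iff_norm_isUnit.mp u.isUnit
  have hre : IsUnit (u : QuadraticAlgebra R a b).re := by
    simpa [norm_def, hu, ← sq] using hnorm
  refine ⟨hre.unit, Units.ext (QuadraticAlgebra.ext ?_ ?_)⟩
  · simp
  · simp [hu]

/-- The order `R + R d ω` of conductor `d` in the quadratic algebra `R + R ω`. -/
def orderOfConductor (a b d : R) : Subalgebra R (QuadraticAlgebra R a b) where
  carrier := {z | d ∣ z.im}
  add_mem' hz hw := dvd_add hz hw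
  mul_mem' {z w} hz hw := by
    rw [Set.mem_ofPred_eq, im_mul]
    exact dvd_add (dvd_add (hw.mul_left _) (hz.mul_right _)) (hw.mul_left _)
  algebraMap_mem' _ := dvd_zero d

lemma mem_orderOfConductor {d : R} {z : QuadraticAlgebra R a b} :
    z ∈ orderOfConductor a b d ↔ d ∣ z.im :=
  Iff.rfl

lemma inv_mem_orderOfConductor {d : R} {u : (QuadraticAlgebra R a b)ˣ}
    (hu : (u : QuadraticAlgebra R a b) ∈ orderOfConductor a b d) :
    (↑u⁻¹ : QuadraticAlgebra R a b) ∈ orderOfConductor a b d := by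
  have hstar : d ∣ (star (u : QuadraticAlgebra R a b)).im := by
    rw [im_star]
    exact hu.neg_right
  rw [star_val_eq_norm_smul_inv, im_smul, smul_eq_mul] at hstar
  exact (isUnit_iff_norm_isUnit.mp u.isUnit).dvd_mul_left.mp hstar

lemma zpow_mem_orderOfConductor {d : R} {u : (QuadraticAlgebra R a b)ˣ}
    (hu : (u : QuadraticAlgebra R a b) ∈ orderOfConductor a b d) (n : ℤ) :
    (↑(u ^ n) : QuadraticAlgebra R a b) ∈ orderOfConductor a b d :=
  (zpow_mem (K := (orderOfConductor a b d).toSubmonoid.units)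
    ((Submonoid.mem_units_iff _ u).mpr ⟨hu, inv_mem_orderOfConductor hu⟩) n).1

lemma isUnit_of_orderOfConductor_eq_top {d : R} (hd : orderOfConductor a b d = ⊤) :
    IsUnit d := by
  have hω : (ω : QuadraticAlgebra R a b) ∈ orderOfConductor a b d := hd ▸ Algebra.mem_top
  rwa [mem_orderOfConductor, omega_im, ← isUnit_iff_dvd_one] at hω

lemma IsFundamentalUnit.isUnit_im {ε : (QuadraticAlgebra R a b)ˣ} (hε : IsFundamentalUnit R ε)
    (hspan : Submodule.span R {u : QuadraticAlgebra R a b | IsUnit u} = ⊤) :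
    IsUnit (ε : QuadraticAlgebra R a b).im := by
  refine isUnit_of_orderOfConductor_eq_top (a := a) (b := b) (Algebra.toSubmodule_eq_top.mp ?_)
  rw [eq_top_iff, ← hspan, Submodule.span_le]
  rintro _ ⟨u, rfl⟩
  obtain ⟨c, n, rfl⟩ := hε u
  exact Subalgebra.mul_mem _ (Subalgebra.algebraMap_mem _ _)
    (zpow_mem_orderOfConductor (dvd_refl _) n)

/-- `R[Y] / (Y² + q Y + r)` as a quadratic algebra, with the class of `Y` going to `ω`. -/
noncomputable def adjoinRootEquivQuadraticAlgebra (q r : R) :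
    AdjoinRoot (X ^ 2 + C q * X + C r : R[X]) ≃ₐ[R] QuadraticAlgebra R (-r) (-q) :=
  AlgEquiv.ofAlgHom
    (AdjoinRoot.liftAlgHom _ (Algebra.ofId R _) ω (by ext <;> simp [sq]))
    (QuadraticAlgebra.lift ⟨AdjoinRoot.root _, by
      have hroot := AdjoinRoot.eval₂_root (X ^ 2 + C q * X + C r : R[X])
      simp only [eval₂_add, eval₂_mul, eval₂_pow, eval₂_X, eval₂_C] at hroot
      simp only [Algebra.smul_def, AdjoinRoot.algebraMap_eq, map_neg]
      linear_combination hroot⟩)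
    (by ext <;> simp)
    (by ext; simp)

lemma adjoinRootEquivQuadraticAlgebra_root (q r : R) :
    adjoinRootEquivQuadraticAlgebra q r (AdjoinRoot.root _) = ω := by
  simp [adjoinRootEquivQuadraticAlgebra]

end QuadraticAlgebra

section Polynomial

variable {K : Type*} [CommRing K] [IsDomain K] {a b : K[X]}

lemma natDegree_trace_pos (hdiscr : 0 < (b ^ 2 + 4 * a).natDegree)
    {z : QuadraticAlgebra K[X] a b} (hz : z.norm.natDegree = 0) (him : z.im ≠ 0) :
    0 < (trace z).natDegree := by
  have hlead : 0 < ((b ^ 2 + 4 * a) * z.im ^ 2).natDegree := by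
    rw [natDegree_mul (ne_zero_of_natDegree_gt hdiscr) (pow_ne_zero 2 him)]
    exact Nat.add_pos_left hdiscr _
  have hnorm : (4 * z.norm).natDegree = 0 :=
    Nat.le_zero.mp (natDegree_mul_le.trans_eq (by rw [hz, natDegree_ofNat]))
  have hsq : 0 < (trace z ^ 2).natDegree := by
    rwa [trace_sq_eq_discr_mul_im_sq_add_norm,
      natDegree_add_eq_left_of_natDegree_lt (hnorm.trans_lt hlead)]
  rw [natDegree_pow] at hsq
  exact Nat.pos_of_mul_pos_left hsq

lemma natDegree_im_mul_mul_im_mul_star_le {z w : QuadraticAlgebra K[X] a b}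
    (hz : z.norm.natDegree = 0) (hw : w.norm.natDegree = 0)
    (hwz : w.im.natDegree ≤ z.im.natDegree) :
    ((z * w).im * (z * star w).im).natDegree ≤ 2 * z.im.natDegree := by
  rw [im_mul_mul_im_mul_star]
  refine (natDegree_sub_le _ _).trans (max_le ?_ ?_)
  · exact natDegree_mul_le.trans_eq (by rw [hw, zero_add, natDegree_pow])
  · refine natDegree_mul_le.trans ?_
    rw [hz, zero_add, natDegree_pow]
    exact Nat.mul_le_mul_left 2 hwz

lemma degree_im_mul_lt_or_degree_im_mul_star_lt (hdiscr : 0 < (b ^ 2 + 4 * a).natDegree)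
    {z w : QuadraticAlgebra K[X] a b} (hz : z.norm.natDegree = 0) (hw : w.norm.natDegree = 0)
    (him : w.im ≠ 0) (hwz : w.im.degree ≤ z.im.degree) :
    (z * w).im.degree < z.im.degree ∨ (z * star w).im.degree < z.im.degree := by
  have hz0 : z.im ≠ 0 := ne_zero_of_degree_ge_degree hwz him
  have htrace := natDegree_trace_pos hdiscr hw him
  have hprod := natDegree_im_mul_mul_im_mul_star_le hz hw (natDegree_le_natDegree hwz)
  have hsum : z.im.natDegree + (trace w).natDegree ≤
      max (z * w).im.natDegree (z * star w).im.natDegree := by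
    rw [← natDegree_mul hz0 (ne_zero_of_natDegree_gt htrace), ← im_mul_add_im_mul_star]
    exact natDegree_add_le _ _
  by_contra! ⟨hmul, hstar⟩
  rw [natDegree_mul (ne_zero_of_degree_ge_degree hmul hz0)
    (ne_zero_of_degree_ge_degree hstar hz0)] at hprod
  have := natDegree_le_natDegree hmul
  have := natDegree_le_natDegree hstar
  omega

lemma degree_im_mul_inv (z : QuadraticAlgebra K[X] a b) (u : (QuadraticAlgebra K[X] a b)ˣ) :
    (z * ↑u⁻¹).im.degree = (z * star (u : QuadraticAlgebra K[X] a b)).im.degree := by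
  rw [star_val_eq_norm_smul_inv, mul_smul_comm, im_smul, smul_eq_mul, degree_mul,
    degree_eq_zero_of_isUnit (isUnit_iff_norm_isUnit.mp u.isUnit), zero_add]

lemma isFundamentalUnit_of_minimal (hdiscr : 0 < (b ^ 2 + 4 * a).natDegree)
    {ε : (QuadraticAlgebra K[X] a b)ˣ} (hε : (ε : QuadraticAlgebra K[X] a b).im ≠ 0)
    (hmin : ∀ u : (QuadraticAlgebra K[X] a b)ˣ, (u : QuadraticAlgebra K[X] a b).im ≠ 0 →
      (ε : QuadraticAlgebra K[X] a b).im.degree ≤ (u : QuadraticAlgebra K[X] a b).im.degree) :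
    IsFundamentalUnit K[X] ε := fun u ↦ by
  have hnorm (v : (QuadraticAlgebra K[X] a b)ˣ) :
      (v : QuadraticAlgebra K[X] a b).norm.natDegree = 0 :=
    natDegree_eq_zero_of_isUnit (isUnit_iff_norm_isUnit.mp v.isUnit)
  induction hd : (u : QuadraticAlgebra K[X] a b).im.degree using WellFoundedLT.induction
    generalizing u with
  | ind d ih =>
    subst hd
    by_cases hu : (u : QuadraticAlgebra K[X] a b).im = 0
    · obtain ⟨c, hc⟩ := exists_eq_map_algebraMap_of_im_eq_zero hu
      exact ⟨c, 0, by rw [hc, zpow_zero, mul_one]⟩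
    rcases degree_im_mul_lt_or_degree_im_mul_star_lt hdiscr (hnorm u) (hnorm ε) hε (hmin u hu)
      with hlt | hlt
    · obtain ⟨c, n, hn⟩ := ih _ hlt (u * ε) rfl
      exact ⟨c, n - 1, by rw [zpow_sub_one, ← mul_assoc, ← hn, mul_inv_cancel_right]⟩
    · rw [← degree_im_mul_inv] at hlt
      obtain ⟨c, n, hn⟩ := ih _ hlt (u * ε⁻¹) rfl
      exact ⟨c, n + 1, by rw [zpow_add_one, ← mul_assoc, ← hn, inv_mul_cancel_right]⟩

theorem exists_isFundamentalUnit (hdiscr : 0 < (b ^ 2 + 4 * a).natDegree) :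
    ∃ ε : (QuadraticAlgebra K[X] a b)ˣ, IsFundamentalUnit K[X] ε := by
  by_cases! hex : ∃ u : (QuadraticAlgebra K[X] a b)ˣ, (u : QuadraticAlgebra K[X] a b).im ≠ 0
  · obtain ⟨ε, hε⟩ := exists_minimalFor_of_wellFoundedLT _
      (fun u : (QuadraticAlgebra K[X] a b)ˣ ↦ (u : QuadraticAlgebra K[X] a b).im.degree) hex
    exact ⟨ε, isFundamentalUnit_of_minimal hdiscr hε.prop
      fun u hu ↦ (le_total _ _).elim id (hε.le_of_le hu)⟩
  · refine ⟨1, fun u ↦ ?_⟩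
    obtain ⟨c, hc⟩ := exists_eq_map_algebraMap_of_im_eq_zero (hex u)
    exact ⟨c, 0, by rw [hc, zpow_zero, mul_one]⟩

theorem exists_isFundamentalUnit_im_eq_one (hdiscr : 0 < (b ^ 2 + 4 * a).natDegree)
    (hspan : Submodule.span K[X] {u : QuadraticAlgebra K[X] a b | IsUnit u} = ⊤) :
    ∃ ε : (QuadraticAlgebra K[X] a b)ˣ, (ε : QuadraticAlgebra K[X] a b).im = 1 ∧
      IsFundamentalUnit K[X] ε := by
  obtain ⟨ε, hε⟩ := exists_isFundamentalUnit hdiscr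
  obtain ⟨d, hd⟩ := hε.isUnit_im hspan
  exact ⟨_, by simp [← hd], hε.map_algebraMap_mul d⁻¹⟩

theorem fundamental_unit_char_two_general (B D : K[X])
    (hdiscr : 0 < (B ^ 2 - 4 * D).natDegree)
    (hgen : Submodule.span K[X]
      {u : AdjoinRoot (X ^ 2 + C B * X + C D : K[X][X]) | IsUnit u} = ⊤) :
    ∃ (a : K[X]) (ε : (AdjoinRoot (X ^ 2 + C B * X + C D : K[X][X]))ˣ),
      (ε : AdjoinRoot (X ^ 2 + C B * X + C D : K[X][X])) =
        AdjoinRoot.of _ a + AdjoinRoot.root _ ∧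
      ∀ u : (AdjoinRoot (X ^ 2 + C B * X + C D : K[X][X]))ˣ, ∃ (l : K) (n : ℤ), IsUnit l ∧
        (u : AdjoinRoot (X ^ 2 + C B * X + C D : K[X][X])) =
          AdjoinRoot.of _ (C l) *
            ((ε ^ n : (AdjoinRoot (X ^ 2 + C B * X + C D : K[X][X]))ˣ) :
              AdjoinRoot (X ^ 2 + C B * X + C D : K[X][X])) := by
  let e := adjoinRootEquivQuadraticAlgebra B D
  obtain ⟨ε, him, hε⟩ := exists_isFundamentalUnit_im_eq_one
    (a := -D) (b := -B) (by simpa [sub_eq_add_neg] using hdiscr)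
    (span_isUnit_eq_top_of_surjective e.toAlgHom e.surjective hgen)
  have hroot : e.symm (ε : QuadraticAlgebra K[X] (-D) (-B)) =
      AdjoinRoot.of _ (ε : QuadraticAlgebra K[X] (-D) (-B)).re + AdjoinRoot.root _ := by
    rw [AlgEquiv.symm_apply_eq, map_add, ← AdjoinRoot.algebraMap_eq, AlgEquiv.commutes,
      adjoinRootEquivQuadraticAlgebra_root]
    ext <;> simp [him]
  refine ⟨_, Units.mapEquiv e.symm.toMulEquiv ε, hroot, fun u ↦ ?_⟩
  obtain ⟨c, n, rfl⟩ := hε.map_algEquiv e.symm u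
  obtain ⟨l, hl, hlc⟩ := isUnit_iff.mp c.isUnit
  exact ⟨l, n, hl, by simp [hlc, AdjoinRoot.algebraMap_eq]⟩

end Polynomial

/-- If the ring `R = K[X,Y]/(Y² + B(X)Y + C(X))` (with `K` a finite field of characteristic
`2` and `B, C` as in the Hasse normal form) is generated by its units as a `K[x]`-module,
then it has a fundamental unit of the form `a(x) + y`: every unit of `R` is
`λ·(a(x) + y)^n` with `λ ∈ K*` and `n ∈ ℤ`. -/
theorem fundamental_unit_char_two
    (K : Type*) [Field K] [Finite K] (hchar : ringChar K = 2)
    (B C : Polynomial K) (hB0 : B ≠ 0) (hC0 : C ≠ 0)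
    (hBmonic : B.Monic) (hBdeg : 2 ≤ B.natDegree)
    (hfac : ∀ q : Polynomial K, Irreducible q → q ∣ B → q ∣ C ∧ ¬ q ^ 2 ∣ C)
    (hCdeg : C.natDegree < 2 * B.natDegree)
    (hgen : Submodule.span (Polynomial K)
      {u : AdjoinRoot ((Polynomial.X : Polynomial (Polynomial K)) ^ 2 +
        Polynomial.C B * Polynomial.X + Polynomial.C C) | IsUnit u} = ⊤) :
    ∃ (a : Polynomial K)
      (ε : (AdjoinRoot ((Polynomial.X : Polynomial (Polynomial K)) ^ 2 +
        Polynomial.C B * Polynomial.X + Polynomial.C C))ˣ),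
      (ε : AdjoinRoot ((Polynomial.X : Polynomial (Polynomial K)) ^ 2 +
          Polynomial.C B * Polynomial.X + Polynomial.C C)) =
          AdjoinRoot.of _ a + AdjoinRoot.root _ ∧
      ∀ u : (AdjoinRoot ((Polynomial.X : Polynomial (Polynomial K)) ^ 2 +
          Polynomial.C B * Polynomial.X + Polynomial.C C))ˣ,
        ∃ (l : K) (n : ℤ), l ≠ 0 ∧
          (u : AdjoinRoot ((Polynomial.X : Polynomial (Polynomial K)) ^ 2 +
            Polynomial.C B * Polynomial.X + Polynomial.C C)) =
            AdjoinRoot.of _ (Polynomial.C l) *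
              ((ε ^ n : (AdjoinRoot ((Polynomial.X : Polynomial (Polynomial K)) ^ 2 +
                Polynomial.C B * Polynomial.X + Polynomial.C C))ˣ) :
                AdjoinRoot ((Polynomial.X : Polynomial (Polynomial K)) ^ 2 +
                  Polynomial.C B * Polynomial.X + Polynomial.C C)) := by
  have : CharP K 2 := ringChar.of_eq hchar
  have hdiscr : B ^ 2 - 4 * C = B ^ 2 := by
    linear_combination -2 * C * CharTwo.two_eq_zero (R := Polynomial K)
  simpa only [isUnit_iff_ne_zero] using fundamental_unit_char_two_general B C
    (by rw [hdiscr, natDegree_pow]; omega) hgen
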